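/- Let n be a natural number with n ≥ 3. Then √n ≤ liminf_{λ→∞} c_n(λ)/√(2λ) and limsup_{λ→∞} c_n(λ)/√(2λ) ≤ √(3n). -/

import Mathlib

open Polynomial Filter

/-- The weighted `L_2` norm with the Gegenbauer weight `w_lam(t) = (1-t^2)^(lam-1/2)`. -/
noncomputable def gegNorm (lam : ℝ) (f : ℝ → ℝ) : ℝ :=
  (∫ x in (-1:ℝ)..1, (f x) ^ 2 * (1 - x ^ 2) ^ (lam - 1/2)) ^ ((1:ℝ)/2)

/-- The best Markov constant `c_n(lam)` in `‖p'‖ ≤ c_n(lam) ‖p‖` for polynomials of degree ≤ n. -/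
noncomputable def markovConst (lam : ℝ) (n : ℕ) : ℝ :=
  sSup { r : ℝ | ∃ p : Polynomial ℝ, p ≠ 0 ∧ p.natDegree ≤ n ∧
    r = gegNorm lam (fun x => (Polynomial.derivative p).eval x) /
        gegNorm lam (fun x => p.eval x) }

/-- Integration of a polynomial against the Gegenbauer weight. -/
noncomputable def gegIntegral (lam : ℝ) (f : ℝ[X]) : ℝ :=
  ∫ x in (-1:ℝ)..1, f.eval x * (1 - x ^ 2) ^ (lam - 1/2)

/-- The Gegenbauer differential operator, whose eigenfunctions are the Gegenbauer polynomials. -/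
noncomputable def gegOp (lam : ℝ) (p : ℝ[X]) : ℝ[X] :=
  C (2 * lam + 1) * (X * derivative p) - (1 - X ^ 2) * derivative (derivative p)

/-- The `k`-th eigenvalue of the Gegenbauer operator. -/
noncomputable def gegEigenvalue (lam : ℝ) (k : ℕ) : ℝ := k * (k + 2 * lam)

section Integral

variable {lam : ℝ}

lemma continuous_gegWeight (hlam : 1 ≤ lam) :
    Continuous fun x : ℝ => (1 - x ^ 2) ^ (lam - 1/2) :=
  Continuous.rpow_const (by fun_prop) fun _ => Or.inr (by linarith)

lemma continuous_eval_mul_gegWeight (hlam : 1 ≤ lam) (f : ℝ[X]) :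
    Continuous fun x : ℝ => f.eval x * (1 - x ^ 2) ^ (lam - 1/2) :=
  f.continuous.mul (continuous_gegWeight hlam)

lemma gegIntegral_add (hlam : 1 ≤ lam) (f g : ℝ[X]) :
    gegIntegral lam (f + g) = gegIntegral lam f + gegIntegral lam g := by
  unfold gegIntegral
  rw [← intervalIntegral.integral_add
    ((continuous_eval_mul_gegWeight hlam f).intervalIntegrable _ _)
    ((continuous_eval_mul_gegWeight hlam g).intervalIntegrable _ _)]
  simp only [eval_add, add_mul]

lemma gegIntegral_C_mul (c : ℝ) (f : ℝ[X]) :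
    gegIntegral lam (C c * f) = c * gegIntegral lam f := by
  unfold gegIntegral
  rw [← intervalIntegral.integral_const_mul]
  simp only [eval_mul, eval_C, mul_assoc]

lemma gegIntegral_sub (hlam : 1 ≤ lam) (f g : ℝ[X]) :
    gegIntegral lam (f - g) = gegIntegral lam f - gegIntegral lam g := by
  have h : f - g = f + C (-1) * g := by
    rw [C_neg, C_1]; ring
  rw [h, gegIntegral_add hlam, gegIntegral_C_mul]
  ring

lemma one_sub_sq_nonneg {x : ℝ} (hx : x ∈ Set.Icc (-1 : ℝ) 1) : 0 ≤ 1 - x ^ 2 := by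
  nlinarith [hx.1, hx.2]

lemma gegIntegral_nonneg {f : ℝ[X]} (hf : ∀ x ∈ Set.Icc (-1 : ℝ) 1, 0 ≤ f.eval x) :
    0 ≤ gegIntegral lam f :=
  intervalIntegral.integral_nonneg (by norm_num) fun x hx =>
    mul_nonneg (hf x hx) (Real.rpow_nonneg (one_sub_sq_nonneg hx) _)

lemma gegIntegral_sq_pos (hlam : 1 ≤ lam) {p : ℝ[X]} (hp : p ≠ 0) :
    0 < gegIntegral lam (p ^ 2) := by
  obtain ⟨c, hc, hpc⟩ : ∃ c ∈ Set.Ioo (-1 : ℝ) 1, p.eval c ≠ 0 := by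
    by_contra! h
    exact hp (p.eq_zero_of_infinite_isRoot
      ((Set.Ioo_infinite (by norm_num : (-1 : ℝ) < 1)).mono fun x hx => h x hx))
  refine intervalIntegral.integral_pos (by norm_num)
    (continuous_eval_mul_gegWeight hlam _).continuousOn
    (fun x hx => ?_) ⟨c, Set.Ioo_subset_Icc_self hc, ?_⟩
  · rw [eval_pow]
    exact mul_nonneg (sq_nonneg _)
      (Real.rpow_nonneg (one_sub_sq_nonneg (Set.Ioc_subset_Icc_self hx)) _)
  · rw [eval_pow]
    have : 0 < 1 - c ^ 2 := by nlinarith [hc.1, hc.2]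
    positivity

/-- Integration by parts against the Gegenbauer weight. -/
lemma gegIntegral_derivative (hlam : 1 ≤ lam) (f : ℝ[X]) :
    gegIntegral lam ((1 - X ^ 2) * derivative f) = (2 * lam + 1) * gegIntegral lam (X * f) := by
  have hderiv : ∀ x ∈ Set.uIcc (-1 : ℝ) 1,
      HasDerivAt (fun x : ℝ => f.eval x * (1 - x ^ 2) ^ (lam + 1/2))
        (((1 - X ^ 2) * derivative f - C (2 * lam + 1) * (X * f)).eval x *
          (1 - x ^ 2) ^ (lam - 1/2)) x := by
    intro x hx
    rw [Set.uIcc_of_le (by norm_num)] at hx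
    have hbase : HasDerivAt (fun x : ℝ => 1 - x ^ 2) (-(2 * x)) x := by
      simpa using (hasDerivAt_pow 2 x).const_sub 1
    have hW := hbase.rpow_const (p := lam + 1/2) (Or.inr (by linarith))
    refine ((f.hasDerivAt x).mul hW).congr_deriv ?_
    have hexp : lam + 1/2 = (lam - 1/2) + 1 := by ring
    have hexp' : lam + 1/2 - 1 = lam - 1/2 := by ring
    rw [hexp', hexp, Real.rpow_add_one' (one_sub_sq_nonneg hx) (by linarith)]
    simp only [eval_sub, eval_mul, eval_one, eval_pow, eval_X, eval_C]
    ring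
  have h := intervalIntegral.integral_eq_sub_of_hasDerivAt hderiv
    ((continuous_eval_mul_gegWeight hlam _).intervalIntegrable _ _)
  change gegIntegral lam _ = _ at h
  rw [gegIntegral_sub hlam, gegIntegral_C_mul] at h
  norm_num at h
  rw [Real.zero_rpow (by linarith)] at h
  linarith

/-- The Gegenbauer operator represents the weighted Dirichlet form. -/
lemma gegIntegral_gegOp_mul (hlam : 1 ≤ lam) (p q : ℝ[X]) :
    gegIntegral lam (gegOp lam p * q) =
      gegIntegral lam ((1 - X ^ 2) * (derivative p * derivative q)) := by
  have h := gegIntegral_derivative hlam (derivative p * q)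
  have h₁ : (1 - X ^ 2 : ℝ[X]) * derivative (derivative p * q) =
      (1 - X ^ 2) * derivative (derivative p) * q +
        (1 - X ^ 2) * (derivative p * derivative q) := by
    rw [derivative_mul]; ring
  have h₂ : gegOp lam p * q = C (2 * lam + 1) * (X * (derivative p * q)) -
      (1 - X ^ 2) * derivative (derivative p) * q := by
    unfold gegOp; ring
  rw [h₁, gegIntegral_add hlam] at h
  rw [h₂, gegIntegral_sub hlam, gegIntegral_C_mul]
  linarith

end Integral

section Eigenfunctions

variable {lam : ℝ}

lemma gegOp_add (p q : ℝ[X]) : gegOp lam (p + q) = gegOp lam p + gegOp lam q := by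
  simp only [gegOp, derivative_add]; ring

lemma gegOp_C_mul (c : ℝ) (p : ℝ[X]) : gegOp lam (C c * p) = C c * gegOp lam p := by
  simp only [gegOp, derivative_C_mul]; ring

lemma coeff_gegOp (p : ℝ[X]) (k : ℕ) :
    (gegOp lam p).coeff k =
      gegEigenvalue lam k * p.coeff k - (k + 2) * (k + 1) * p.coeff (k + 2) := by
  have h : gegOp lam p = C (2 * lam + 1) * (X * derivative p) - derivative (derivative p) +
      X * (X * derivative (derivative p)) := by
    unfold gegOp; ring
  rw [h]
  simp only [gegEigenvalue, coeff_add, coeff_sub, coeff_C_mul]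
  rcases k with _ | _ | k
  · simp [coeff_derivative]; ring
  · simp [coeff_derivative, coeff_X_mul]; ring
  · simp [coeff_derivative, coeff_X_mul]; ring

lemma gegEigenvalue_strictMono (hlam : 0 < lam) : StrictMono (gegEigenvalue lam) := by
  intro k m hkm
  have h : (k : ℝ) < m := by exact_mod_cast hkm
  have hk : (0 : ℝ) ≤ k := k.cast_nonneg
  unfold gegEigenvalue
  nlinarith

lemma exists_gegOp_sub_eq {μ : ℝ} (m : ℕ) (hμ : ∀ k < m, gegEigenvalue lam k ≠ μ) (f : ℝ[X])
    (hf : f.degree < m) : ∃ r : ℝ[X], r.degree < m ∧ gegOp lam r - C μ * r = f := by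
  induction m generalizing f with
  | zero =>
    refine ⟨0, by simp, ?_⟩
    have : f = 0 := by simpa using hf
    simp [this, gegOp]
  | succ m ih =>
    have hne : gegEigenvalue lam m - μ ≠ 0 := sub_ne_zero.2 (hμ m m.lt_succ_self)
    set c := f.coeff m / (gegEigenvalue lam m - μ) with hc
    have hdeg : (f - (gegOp lam (C c * X ^ m) - C μ * (C c * X ^ m))).degree < (m : WithBot ℕ) := by
      rw [degree_lt_iff_coeff_zero] at hf ⊢
      intro k hk
      have h2 : k + 2 ≠ m := by omega
      simp only [coeff_sub, coeff_gegOp, coeff_C_mul, coeff_X_pow, if_neg h2]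
      rcases hk.eq_or_lt with rfl | hk
      · rw [hc]; simp only [if_true]; field_simp; ring
      · rw [if_neg hk.ne', hf k hk]; ring
    obtain ⟨r, hr, hrf⟩ := ih (fun k hk => hμ k (hk.trans m.lt_succ_self)) _ hdeg
    refine ⟨r + C c * X ^ m, ?_, ?_⟩
    · rw [degree_lt_iff_coeff_zero] at hr ⊢
      intro k hk
      have hkm : k ≠ m := by omega
      simp [hr k (by omega), coeff_X_pow, hkm]
    · rw [gegOp_add, mul_add]
      linear_combination hrf

/-- The Gegenbauer operator has a monic eigenpolynomial of every degree. -/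
lemma exists_gegOp_eigenpolynomial (hlam : 0 < lam) (n : ℕ) :
    ∃ G : ℝ[X], G.natDegree ≤ n ∧ G.coeff n = 1 ∧ gegOp lam G = C (gegEigenvalue lam n) * G := by
  have hdeg : (C (gegEigenvalue lam n) * X ^ n - gegOp lam (X ^ n)).degree < (n : WithBot ℕ) := by
    rw [degree_lt_iff_coeff_zero]
    intro k hk
    have h2 : k + 2 ≠ n := by omega
    simp only [coeff_sub, coeff_gegOp, coeff_C_mul, coeff_X_pow, if_neg h2]
    rcases hk.eq_or_lt with rfl | hk
    · simp
    · simp [hk.ne']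
  obtain ⟨r, hr, hrf⟩ := exists_gegOp_sub_eq n
    (fun k hk => (gegEigenvalue_strictMono hlam hk).ne) _ hdeg
  rw [degree_lt_iff_coeff_zero] at hr
  refine ⟨X ^ n + r, ?_, by simp [hr n le_rfl], ?_⟩
  · rw [natDegree_le_iff_coeff_eq_zero]
    intro k hk
    simp [hr k hk.le, coeff_X_pow, hk.ne']
  · rw [gegOp_add]
    linear_combination hrf

end Eigenfunctions

section Bounds

variable {lam : ℝ}

/-- The weighted Dirichlet form on polynomials of degree at most `n` is bounded by the `n`-th
eigenvalue. -/
lemma gegIntegral_dirichlet_le (hlam : 1 ≤ lam) (n : ℕ) (p : ℝ[X]) (hp : p.natDegree ≤ n) :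
    gegIntegral lam ((1 - X ^ 2) * (derivative p * derivative p)) ≤
      gegEigenvalue lam n * gegIntegral lam (p ^ 2) := by
  induction n generalizing p with
  | zero =>
    rw [eq_C_of_natDegree_le_zero hp]
    simp [gegEigenvalue, gegIntegral]
  | succ n ih =>
    obtain ⟨G, hGdeg, hGcoeff, hG⟩ := exists_gegOp_eigenpolynomial (by linarith : 0 < lam) (n + 1)
    set μ := gegEigenvalue lam (n + 1)
    obtain ⟨a, ha⟩ : ∃ a, a = p.coeff (n + 1) := ⟨_, rfl⟩
    obtain ⟨r, rfl⟩ : ∃ r, p = C a * G + r := ⟨p - C a * G, by ring⟩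
    have hr : r.natDegree ≤ n := by
      rw [natDegree_le_iff_coeff_eq_zero] at hp hGdeg ⊢
      intro k hk
      rcases Nat.lt_or_ge (n + 1) k with h | h
      · have := hp k h
        rwa [coeff_add, coeff_C_mul, hGdeg k h, mul_zero, zero_add] at this
      · obtain rfl : k = n + 1 := by omega
        rw [coeff_add, coeff_C_mul, hGcoeff] at ha
        linarith
    have hsq : 0 ≤ gegIntegral lam (r ^ 2) :=
      gegIntegral_nonneg fun x _ => by rw [eval_pow]; positivity
    have hform : gegIntegral lam (gegOp lam r * r) ≤ μ * gegIntegral lam (r ^ 2) := by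
      rw [gegIntegral_gegOp_mul hlam]
      exact (ih r hr).trans (mul_le_mul_of_nonneg_right
        (gegEigenvalue_strictMono (by linarith) n.lt_succ_self).le hsq)
    have hsymm : gegIntegral lam (gegOp lam r * G) = μ * gegIntegral lam (G * r) := by
      rw [gegIntegral_gegOp_mul hlam, mul_comm (derivative r), ← gegIntegral_gegOp_mul hlam, hG,
        mul_assoc, gegIntegral_C_mul]
    have hexpand : gegOp lam (C a * G + r) * (C a * G + r) =
        C (a ^ 2 * μ) * G ^ 2 + C (a * μ) * (G * r) + C a * (gegOp lam r * G) +
          gegOp lam r * r := by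
      rw [gegOp_add, gegOp_C_mul, hG]
      simp only [C_mul, C_pow]
      ring
    have hexpand' : (C a * G + r) ^ 2 = C (a ^ 2) * G ^ 2 + C (2 * a) * (G * r) + r ^ 2 := by
      have h2 : (C 2 : ℝ[X]) = 2 := rfl
      simp only [C_mul, C_pow, h2]
      ring
    rw [← gegIntegral_gegOp_mul hlam, hexpand, hexpand']
    simp only [gegIntegral_add hlam, gegIntegral_C_mul, hsymm]
    linarith

/-- For large `lam`, polynomials of bounded degree concentrate near the origin. -/
lemma gegIntegral_X_mul_sq_le (n : ℕ) (hlam : 2 * (1 + 3 * n) ≤ lam) (q : ℝ[X])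
    (hq : q.natDegree ≤ n) :
    gegIntegral lam ((X * q) ^ 2) ≤ 1 / 2 * gegIntegral lam (q ^ 2) := by
  have hn : (0 : ℝ) ≤ n := n.cast_nonneg
  have hlam1 : 1 ≤ lam := by linarith
  have hparts := gegIntegral_derivative hlam1 (X * q ^ 2)
  have hdir := gegIntegral_dirichlet_le hlam1 n q hq
  have hAM : 0 ≤ gegIntegral lam ((1 - X ^ 2) * (C lam * (X * q) - derivative q) ^ 2) :=
    gegIntegral_nonneg fun x hx => by
      simp only [eval_mul, eval_sub, eval_one, eval_pow, eval_X]
      exact mul_nonneg (one_sub_sq_nonneg hx) (sq_nonneg _)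
  have hdrop : 0 ≤ gegIntegral lam (X ^ 2 * q ^ 2 * X ^ 2) :=
    gegIntegral_nonneg fun x _ => by
      simp only [eval_mul, eval_pow, eval_X]
      positivity
  have hA : 0 ≤ gegIntegral lam ((X * q) ^ 2) :=
    gegIntegral_nonneg fun x _ => by rw [eval_pow]; positivity
  have hN : 0 ≤ gegIntegral lam (q ^ 2) :=
    gegIntegral_nonneg fun x _ => by rw [eval_pow]; positivity
  have h₁ : (1 - X ^ 2 : ℝ[X]) * derivative (X * q ^ 2) =
      q ^ 2 - (X * q) ^ 2 + C 2 * ((1 - X ^ 2) * (X * q * derivative q)) := by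
    have h2 : (C 2 : ℝ[X]) = 2 := rfl
    rw [h2, derivative_mul, derivative_X, derivative_sq, h2]
    ring
  have h₂ : (X * (X * q ^ 2) : ℝ[X]) = (X * q) ^ 2 := by ring
  have h₃ : (1 - X ^ 2 : ℝ[X]) * (C lam * (X * q) - derivative q) ^ 2 =
      C (lam ^ 2) * ((X * q) ^ 2 - X ^ 2 * q ^ 2 * X ^ 2) -
        C (2 * lam) * ((1 - X ^ 2) * (X * q * derivative q)) +
        (1 - X ^ 2) * (derivative q * derivative q) := by
    have h2 : (C 2 : ℝ[X]) = 2 := rfl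
    simp only [C_mul, C_pow, h2]
    ring
  rw [h₁, h₂] at hparts
  rw [h₃] at hAM
  simp only [gegIntegral_add hlam1, gegIntegral_sub hlam1, gegIntegral_C_mul] at hparts hAM
  unfold gegEigenvalue at hdir
  set A := gegIntegral lam ((X * q) ^ 2)
  set N := gegIntegral lam (q ^ 2)
  set J := gegIntegral lam ((1 - X ^ 2) * (X * q * derivative q))
  have hdir' : n * (n + 2 * lam) * N ≤ lam * (3 * n) * N := by
    refine mul_le_mul_of_nonneg_right ?_ hN
    nlinarith
  have hdrop' := mul_nonneg (sq_nonneg lam) hdrop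
  have hJ : lam * (2 * J) ≤ lam * (lam * A + 3 * n * N) := by linarith
  have hJ' := le_of_mul_le_mul_left hJ (by linarith)
  have hfinal : lam * A ≤ (1 + 3 * n) * N := by nlinarith
  have : (1 + 3 * n) * N ≤ lam * (1 / 2 * N) := by nlinarith
  exact le_of_mul_le_mul_left (hfinal.trans this) (by linarith)

lemma gegIntegral_derivative_sq_le (n : ℕ) (hlam : 2 * (1 + 3 * n) ≤ lam) (p : ℝ[X])
    (hp : p.natDegree ≤ n) :
    gegIntegral lam (derivative p ^ 2) ≤ 3 * n * (2 * lam) * gegIntegral lam (p ^ 2) := by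
  have hn : (0 : ℝ) ≤ n := n.cast_nonneg
  have hlam1 : 1 ≤ lam := by linarith
  have hdir := gegIntegral_dirichlet_le hlam1 n p hp
  have hconc := gegIntegral_X_mul_sq_le n hlam (derivative p)
    ((natDegree_derivative_le p).trans (by omega))
  have h : (1 - X ^ 2 : ℝ[X]) * (derivative p * derivative p) =
      derivative p ^ 2 - (X * derivative p) ^ 2 := by ring
  rw [h, gegIntegral_sub hlam1] at hdir
  have hN : 0 ≤ gegIntegral lam (p ^ 2) :=
    gegIntegral_nonneg fun x _ => by rw [eval_pow]; positivity
  have hμ : gegEigenvalue lam n * gegIntegral lam (p ^ 2) ≤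
      3 * n * lam * gegIntegral lam (p ^ 2) := by
    refine mul_le_mul_of_nonneg_right ?_ hN
    unfold gegEigenvalue
    nlinarith
  linarith

lemma gegNorm_eval (p : ℝ[X]) :
    gegNorm lam (fun x => p.eval x) = √(gegIntegral lam (p ^ 2)) := by
  simp only [gegNorm, gegIntegral, Real.sqrt_eq_rpow, eval_pow]

lemma gegNorm_div_le (n : ℕ) (hlam : 2 * (1 + 3 * n) ≤ lam) (p : ℝ[X]) (hp : p.natDegree ≤ n) :
    gegNorm lam (fun x => (derivative p).eval x) / gegNorm lam (fun x => p.eval x) ≤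
      √(3 * n) * √(2 * lam) := by
  have hn : (0 : ℝ) ≤ n := n.cast_nonneg
  rw [gegNorm_eval, gegNorm_eval]
  refine div_le_of_le_mul₀ (Real.sqrt_nonneg _) (by positivity) ?_
  rw [← Real.sqrt_mul (by positivity), ← Real.sqrt_mul (by nlinarith)]
  exact Real.sqrt_le_sqrt (gegIntegral_derivative_sq_le n hlam p hp)

lemma markovConst_le (n : ℕ) (hlam : 2 * (1 + 3 * n) ≤ lam) :
    markovConst lam n ≤ √(3 * n) * √(2 * lam) := by
  refine Real.sSup_le ?_ (by positivity)
  rintro _ ⟨p, -, hp, rfl⟩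
  exact gegNorm_div_le n hlam p hp

lemma le_markovConst (n : ℕ) (hlam : 2 * (1 + 3 * n) ≤ lam) :
    √n * √(2 * lam) ≤ markovConst lam n := by
  have hn : (0 : ℝ) ≤ n := n.cast_nonneg
  have hlam1 : 1 ≤ lam := by linarith
  obtain ⟨G, hGdeg, hGcoeff, hG⟩ := exists_gegOp_eigenpolynomial (by linarith : 0 < lam) n
  have hG0 : G ≠ 0 := by
    rintro rfl
    simp at hGcoeff
  have hpos := gegIntegral_sq_pos hlam1 hG0
  refine le_csSup_of_le ⟨√(3 * n) * √(2 * lam), ?_⟩ ⟨G, hG0, hGdeg, rfl⟩ ?_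
  · rintro _ ⟨p, -, hp, rfl⟩
    exact gegNorm_div_le n hlam p hp
  rw [gegNorm_eval, gegNorm_eval, le_div_iff₀ (Real.sqrt_pos.2 hpos), ← Real.sqrt_mul hn,
    ← Real.sqrt_mul (by nlinarith)]
  refine Real.sqrt_le_sqrt ?_
  have hdir := gegIntegral_gegOp_mul hlam1 G G
  have h : (1 - X ^ 2 : ℝ[X]) * (derivative G * derivative G) =
      derivative G ^ 2 - (X * derivative G) ^ 2 := by ring
  rw [hG, h, mul_assoc, ← sq, gegIntegral_C_mul, gegIntegral_sub hlam1] at hdir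
  have hdrop : 0 ≤ gegIntegral lam ((X * derivative G) ^ 2) :=
    gegIntegral_nonneg fun x _ => by rw [eval_pow]; positivity
  have hμ : n * (2 * lam) * gegIntegral lam (G ^ 2) ≤
      gegEigenvalue lam n * gegIntegral lam (G ^ 2) := by
    refine mul_le_mul_of_nonneg_right ?_ hpos.le
    unfold gegEigenvalue
    nlinarith
  linarith

end Bounds

theorem markov_asymptotics_lambda_to_infty (n : ℕ) (hn : 3 ≤ n) :
    Real.sqrt n ≤
      Filter.liminf (fun lam : ℝ => markovConst lam n / Real.sqrt (2*lam)) Filter.atTop ∧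
    Filter.limsup (fun lam : ℝ => markovConst lam n / Real.sqrt (2*lam)) Filter.atTop ≤
      Real.sqrt (3*n) := by
  have hsqrt : ∀ lam : ℝ, 2 * (1 + 3 * (n : ℝ)) ≤ lam → 0 < √(2 * lam) := fun lam hlam =>
    Real.sqrt_pos.2 (by linarith [(n.cast_nonneg : (0 : ℝ) ≤ n)])
  have hlower : ∀ᶠ lam : ℝ in atTop, √n ≤ markovConst lam n / √(2 * lam) := by
    filter_upwards [eventually_ge_atTop (2 * (1 + 3 * (n : ℝ)))] with lam hlam
    exact (le_div_iff₀ (hsqrt lam hlam)).2 (le_markovConst n hlam)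
  have hupper : ∀ᶠ lam : ℝ in atTop, markovConst lam n / √(2 * lam) ≤ √(3 * n) := by
    filter_upwards [eventually_ge_atTop (2 * (1 + 3 * (n : ℝ)))] with lam hlam
    exact (div_le_iff₀ (hsqrt lam hlam)).2 (markovConst_le n hlam)
  exact ⟨le_liminf_of_le (isBoundedUnder_of_eventually_le hupper).isCoboundedUnder_ge hlower,
    limsup_le_of_le (isBoundedUnder_of_eventually_ge hlower).isCoboundedUnder_le hupper⟩
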